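/- Let ℓ be an odd prime and D an integer that is a quadratic nonresidue modulo ℓ. For each k ≥ 1 let R_k = (ℤ/ℓᵏℤ)[X]/(X² − D), let 𝒜_{ℓᵏ,I} = {σ ∈ GL₂(R_k) | det σ lies in the image of (ℤ/ℓᵏℤ)^×} and 𝒜ᵗ_{ℓᵏ,I} = {σ ∈ 𝒜_{ℓᵏ,I} | tr σ lies in the image of ℤ/ℓᵏℤ}. Then the sequence k ↦ ℓᵏ · #𝒜ᵗ_{ℓᵏ,I} / #𝒜_{ℓᵏ,I} (a sequence of real numbers) converges as k → ∞ to ℓ³(ℓ² + ℓ + 1)/((ℓ+1)(ℓ⁴ − 1)). -/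

import Mathlib

open Matrix Polynomial Filter

/-- The ring `R_k = (ℤ/ℓᵏℤ)[X]/(X² − D)`. -/
abbrev InertRing (ℓ k : ℕ) (D : ℤ) : Type :=
  AdjoinRoot ((X : Polynomial (ZMod (ℓ ^ k))) ^ 2 - C (D : ZMod (ℓ ^ k)))

/-!
Let `R = ℤ/ℓᵏℤ` and `S = R[√D]`. Both are local rings, so `#𝒜` is counted by choosing a unimodular
first row in `S²` and then a second row with prescribed determinant.

For `𝒜ᵗ`, write a matrix over `S` with trace in `R` as `s + A` with `s ∈ R` and `A` traceless, and
put `w = -det A`, so that its determinant is `s² - w`. That `w` lies in `R` is an orthogonality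
relation between two vectors of `R³`, the coordinates of `A`. Multiplication by `√D` permutes these
`A` and replaces `w` by `D w`; as `D` is not a square modulo `ℓ`, the equations `s² = w` and
`s² = D w` have two roots altogether in the residue field, so that on average over `A` exactly
`|Rˣ|` values of `s` make `s² - w` a unit. Hence `#𝒜ᵗ = |Rˣ| · #{(x, y) ∈ R³ × R³ | x ⬝ y = 0}`.

If `x` is unimodular, `x ⬝ y` is equidistributed; otherwise `x = ℓ x'`, and `x ⬝ y = 0` in `ℤ/ℓᵏℤ`
means that `x' ⬝ y = 0` in `ℤ/ℓᵏ⁻¹ℤ`. The normalised number of orthogonal pairs thus satisfies an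
affine recurrence in `k` of ratio `ℓ⁻²`, and converges to `(1 - ℓ⁻³) / (1 - ℓ⁻²)`.
-/

section FibreCounting

theorem card_subtype_comp_mul_card {G H : Type*} [AddGroup G] [AddGroup H] (f : G →+ H)
    (hf : Function.Surjective f) (P : H → Prop) :
    Nat.card {g // P (f g)} * Nat.card H = Nat.card G * Nat.card {h // P h} := by
  have card_subtype_comp (Q : H → Prop) :
      Nat.card {g // Q (f g)} = Nat.card {h // Q h} * Nat.card f.ker := by
    rw [← Nat.card_prod]
    exact Nat.card_congr <| (Equiv.sigmaSubtypeFiberEquivSubtype f fun _ => Iff.rfl).symm.trans <|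
      (Equiv.sigmaCongrRight fun h : Subtype Q => f.fiberEquivKerOfSurjective hf h.1).trans <|
      Equiv.sigmaEquivProd _ _
  have card_domain : Nat.card G = Nat.card H * Nat.card f.ker := by
    simpa only [Nat.card_subtype_true] using card_subtype_comp fun _ => True
  rw [card_subtype_comp P, card_domain]
  ring

theorem card_subtype_add_card_subtype_not {α : Type*} [Finite α] (P : α → Prop) :
    Nat.card {a // P a} + Nat.card {a // ¬ P a} = Nat.card α := by
  classical
  rw [← Nat.card_sum, Nat.card_congr (Equiv.sumCompl P)]

theorem card_subtype_and_add_card_subtype_not_and {α : Type*} [Finite α] (P Q : α → Prop) :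
    Nat.card {a // P a ∧ Q a} + Nat.card {a // ¬ P a ∧ Q a} = Nat.card {a // Q a} := by
  simp_rw [and_comm (b := Q _)]
  rw [← card_subtype_add_card_subtype_not fun a : {a // Q a} => P a]
  exact congrArg₂ (· + ·)
    (Nat.card_congr (Equiv.subtypeSubtypeEquivSubtypeInter Q P)).symm
    (Nat.card_congr (Equiv.subtypeSubtypeEquivSubtypeInter Q fun a => ¬ P a)).symm

theorem card_subtype_prod {α β : Type*} [Fintype α] [Finite β] (P : α → β → Prop) :
    Nat.card {p : α × β // P p.1 p.2} = ∑ a, Nat.card {b // P a b} := by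
  rw [Nat.card_congr (Equiv.subtypeProdEquivSigmaSubtype P), Nat.card_sigma]

theorem card_units_subtype {M : Type*} [Monoid M] {P : M → Prop} (hP : ∀ a, P a → IsUnit a) :
    Nat.card {u : Mˣ // P u} = Nat.card {a // P a} :=
  Nat.card_preimage_of_injective (s := {a | P a}) Units.val_injective hP

end FibreCounting

section DotProduct

variable {ι R : Type*} [Fintype ι] [CommRing R]

theorem dotProduct_surjective_of_isUnit {x : ι → R} {i : ι} (hi : IsUnit (x i)) :
    Function.Surjective fun y => x ⬝ᵥ y := by
  classical
  intro z
  obtain ⟨u, hu⟩ := hi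
  exact ⟨Pi.single i (↑u⁻¹ * z), by simp [← hu]⟩

theorem card_dotProduct_fiber_mul_card {x : ι → R} {i : ι} (hi : IsUnit (x i)) (P : R → Prop) :
    Nat.card {y // P (x ⬝ᵥ y)} * Nat.card R =
      Nat.card R ^ Fintype.card ι * Nat.card {z // P z} := by
  have := card_subtype_comp_mul_card (dotProductBilin R R x).toAddMonoidHom
    (dotProduct_surjective_of_isUnit hi) P
  rwa [Nat.card_fun, Nat.card_eq_fintype_card (α := ι)] at this

theorem card_unimodular_dotProduct_mul_card [Finite R] (P : R → Prop) :
    Nat.card {p : (ι → R) × (ι → R) // (∃ i, IsUnit (p.1 i)) ∧ P (p.1 ⬝ᵥ p.2)} * Nat.card R =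
      Nat.card {x : ι → R // ∃ i, IsUnit (x i)} *
        (Nat.card R ^ Fintype.card ι * Nat.card {z // P z}) := by
  classical
  have := Fintype.ofFinite R
  have split : {p : (ι → R) × (ι → R) // (∃ i, IsUnit (p.1 i)) ∧ P (p.1 ⬝ᵥ p.2)} ≃
      {p : {x : ι → R // ∃ i, IsUnit (x i)} × (ι → R) // P (p.1.1 ⬝ᵥ p.2)} :=
    { toFun := fun p => ⟨(⟨p.1.1, p.2.1⟩, p.1.2), p.2.2⟩
      invFun := fun p => ⟨(p.1.1.1, p.1.2), p.1.1.2, p.2⟩ }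
  rw [Nat.card_congr split,
    card_subtype_prod fun (x : {x : ι → R // ∃ i, IsUnit (x i)}) y => P (x.1 ⬝ᵥ y), Finset.sum_mul]
  simp_rw [fun x : {x : ι → R // ∃ i, IsUnit (x i)} =>
    card_dotProduct_fiber_mul_card x.2.choose_spec P]
  rw [Finset.sum_const, Finset.card_univ, smul_eq_mul, ← Nat.card_eq_fintype_card]

end DotProduct

section LocalRing

open IsLocalRing

variable {R : Type*} [CommRing R] [IsLocalRing R]

theorem exists_isUnit_of_isUnit_dotProduct {ι : Type*} [Fintype ι] {x y : ι → R}
    (h : IsUnit (x ⬝ᵥ y)) : ∃ i, IsUnit (x i) := by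
  contrapose! h
  exact (mem_maximalIdeal _).1 <|
    Ideal.sum_mem _ fun i _ => Ideal.mul_mem_right _ _ ((mem_maximalIdeal _).2 (h i))

variable [Finite R]

theorem card_units_add_card_maximalIdeal :
    Nat.card Rˣ + Nat.card (maximalIdeal R) = Nat.card R := by
  rw [← card_subtype_add_card_subtype_not (fun x : R => IsUnit x),
    ← card_units_subtype (P := IsUnit) fun _ => id,
    Nat.card_congr (Equiv.subtypeUnivEquiv Units.isUnit)]
  rfl

theorem card_unimodular (ι : Type*) [Fintype ι] :
    Nat.card {x : ι → R // ∃ i, IsUnit (x i)} =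
      Nat.card R ^ Fintype.card ι - Nat.card (maximalIdeal R) ^ Fintype.card ι := by
  have card_not_unimodular : Nat.card {x : ι → R // ¬ ∃ i, IsUnit (x i)} =
      Nat.card (maximalIdeal R) ^ Fintype.card ι := by
    rw [← Nat.card_eq_fintype_card (α := ι), ← Nat.card_fun]
    simp_rw [not_exists]
    exact Nat.card_congr (Equiv.subtypePiEquivPi (p := fun _ (x : R) => x ∈ maximalIdeal R))
  have := card_subtype_add_card_subtype_not fun x : ι → R => ∃ i, IsUnit (x i)
  rw [Nat.card_fun, Nat.card_eq_fintype_card (α := ι)] at this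
  lia

/-- The set of pairs of orthogonal vectors in `R^ι`, for the standard bilinear form. -/
def orthogonalPairs (ι R : Type*) [Fintype ι] [CommRing R] : Set ((ι → R) × (ι → R)) :=
  {p | p.1 ⬝ᵥ p.2 = 0}

theorem card_unimodular_orthogonalPairs_mul_card (ι : Type*) [Fintype ι] :
    Nat.card {p : (ι → R) × (ι → R) // (∃ i, IsUnit (p.1 i)) ∧ p ∈ orthogonalPairs ι R} *
        Nat.card R =
      (Nat.card R ^ Fintype.card ι - Nat.card (maximalIdeal R) ^ Fintype.card ι) *
        Nat.card R ^ Fintype.card ι := by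
  have := card_unimodular_dotProduct_mul_card (ι := ι) fun z : R => z = 0
  rwa [card_unimodular, Nat.card_unique (α := {z : R // z = 0}), mul_one] at this

end LocalRing

section PrincipalMaximalIdeal

variable {R R' : Type*} [CommRing R] [CommRing R'] {π : R →+* R'} {ϖ : R}

theorem exists_addEquiv_of_eq_span_singleton {I : Ideal R} (hπ : Function.Surjective π)
    (hI : I = Ideal.span {ϖ}) (hker : ∀ x, ϖ * x = 0 ↔ π x = 0) :
    ∃ e : R' ≃+ I, ∀ x, (e (π x) : R) = ϖ * x := by
  let mulGenerator : R →+ I := (AddMonoidHom.mulLeft ϖ).codRestrict I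
    fun x => hI ▸ Ideal.mem_span_singleton'.2 ⟨x, mul_comm x ϖ⟩
  have ker_le : π.toAddMonoidHom.ker ≤ mulGenerator.ker :=
    fun x hx => Subtype.ext ((hker x).2 hx)
  let f : R' →+ I := π.toAddMonoidHom.liftOfSurjective hπ ⟨mulGenerator, ker_le⟩
  have f_map (x : R) : f (π x) = mulGenerator x :=
    π.toAddMonoidHom.liftOfRightInverse_comp_apply _ _ ⟨mulGenerator, ker_le⟩ x
  refine ⟨AddEquiv.ofBijective f ⟨(injective_iff_map_eq_zero f).2 fun y hy => ?_, ?_⟩,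
    fun x => congrArg Subtype.val (f_map x)⟩
  · obtain ⟨x, rfl⟩ := hπ y
    exact (hker x).1 (congrArg Subtype.val ((f_map x).symm.trans hy))
  · rintro ⟨y, hy⟩
    obtain ⟨x, rfl⟩ := Ideal.mem_span_singleton'.1 (hI ▸ hy)
    exact ⟨π x, (f_map x).trans (Subtype.ext (mul_comm ϖ x))⟩

variable [IsLocalRing R] [Finite R]

open IsLocalRing

theorem card_not_unimodular_orthogonalPairs_mul_card (ι : Type*) [Fintype ι]
    (hπ : Function.Surjective π) (hϖ : maximalIdeal R = Ideal.span {ϖ})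
    (hker : ∀ x, ϖ * x = 0 ↔ π x = 0) :
    Nat.card {p : (ι → R) × (ι → R) // (¬ ∃ i, IsUnit (p.1 i)) ∧ p ∈ orthogonalPairs ι R} *
        Nat.card R' ^ Fintype.card ι =
      Nat.card R ^ Fintype.card ι * Nat.card (orthogonalPairs ι R') := by
  have : Finite R' := .of_surjective π hπ
  obtain ⟨e, he⟩ := exists_addEquiv_of_eq_span_singleton hπ hϖ hker
  have orthogonal_iff (x : ι → R') (y : ι → R) :
      (fun i => (e (x i) : R)) ⬝ᵥ y = 0 ↔ x ⬝ᵥ (π ∘ y) = 0 := by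
    choose z hz using fun i => hπ (x i)
    obtain rfl : π ∘ z = x := funext hz
    rw [← RingHom.map_dotProduct, ← hker, ← smul_eq_mul, ← smul_dotProduct]
    simp only [Function.comp_apply, he]
    rfl
  have divide : {p : (ι → R') × (ι → R) // p.1 ⬝ᵥ (π ∘ p.2) = 0} ≃
      {p : (ι → R) × (ι → R) // (¬ ∃ i, IsUnit (p.1 i)) ∧ p ∈ orthogonalPairs ι R} :=
    { toFun := fun p => ⟨(fun i => e (p.1.1 i), p.1.2),
        not_exists.2 fun i => (e (p.1.1 i)).2, (orthogonal_iff _ _).2 p.2⟩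
      invFun := fun p => ⟨(fun i => e.symm ⟨p.1.1 i, not_exists.1 p.2.1 i⟩, p.1.2),
        (orthogonal_iff _ _).1 <| by
          simp only [e.apply_symm_apply]
          exact p.2.2⟩
      left_inv := fun p => Subtype.ext <| Prod.ext (funext fun i => e.symm_apply_apply _) rfl
      right_inv := fun p => Subtype.ext <| Prod.ext
        (funext fun i => congrArg Subtype.val (e.apply_symm_apply _)) rfl }
  let reduce : (ι → R') × (ι → R) →+ (ι → R') × (ι → R') :=
    (AddMonoidHom.id _).prodMap (π.toAddMonoidHom.compLeft ι)
  have reduce_surjective : Function.Surjective reduce :=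
    Function.surjective_id.prodMap hπ.comp_left
  have := card_subtype_comp_mul_card reduce reduce_surjective (· ∈ orthogonalPairs ι R')
  rw [Nat.card_prod, Nat.card_prod, Nat.card_fun, Nat.card_fun, Nat.card_eq_fintype_card (α := ι),
    mul_left_comm, mul_assoc] at this
  rw [← Nat.card_congr divide]
  exact Nat.eq_of_mul_eq_mul_left (pow_pos Nat.card_pos _) this

/-- The number of orthogonal pairs in `R^ι`, relative to the expected number `|R|^(2|ι|) / |R|`. -/
noncomputable def orthogonalDensity (ι R : Type*) [Fintype ι] [CommRing R] : ℝ :=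
  Nat.card R * Nat.card (orthogonalPairs ι R) / (Nat.card R : ℝ) ^ (2 * Fintype.card ι)

theorem orthogonalDensity_eq (ι : Type*) [Fintype ι]
    (hπ : Function.Surjective π) (hϖ : maximalIdeal R = Ideal.span {ϖ})
    (hker : ∀ x, ϖ * x = 0 ↔ π x = 0) {t : ℝ}
    (ht : (Nat.card (maximalIdeal R) : ℝ) = t * Nat.card R) :
    orthogonalDensity ι R =
      1 - t ^ Fintype.card ι + t ^ Fintype.card ι / t * orthogonalDensity ι R' := by
  have : Finite R' := .of_surjective π hπ
  set n := Fintype.card ι with hn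
  have card_R' : (Nat.card R' : ℝ) = t * Nat.card R := by
    rw [← ht, Nat.card_congr (exists_addEquiv_of_eq_span_singleton hπ hϖ hker).choose.toEquiv]
  have card_R_ne_zero : (Nat.card R : ℝ) ≠ 0 := Nat.cast_ne_zero.2 Nat.card_pos.ne'
  have t_ne_zero : t ≠ 0 := by
    rintro rfl
    exact Nat.cast_ne_zero.2 Nat.card_pos.ne' (card_R'.trans (zero_mul _))
  have le : Nat.card (maximalIdeal R) ^ n ≤ Nat.card R ^ n :=
    Nat.pow_le_pow_left (Nat.card_le_card_of_injective _ Subtype.val_injective) n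
  have unimodular := congrArg (Nat.cast : ℕ → ℝ)
    (card_unimodular_orthogonalPairs_mul_card (R := R) ι)
  have not_unimodular := congrArg (Nat.cast : ℕ → ℝ)
    (card_not_unimodular_orthogonalPairs_mul_card ι hπ hϖ hker)
  have total := card_subtype_and_add_card_subtype_not_and
    (fun p : (ι → R) × (ι → R) => ∃ i, IsUnit (p.1 i)) (· ∈ orthogonalPairs ι R)
  change _ = Nat.card (orthogonalPairs ι R) at total
  rw [orthogonalDensity, orthogonalDensity, ← total, card_R']
  rw [← hn] at unimodular not_unimodular ⊢
  push_cast [Nat.cast_sub le, ht, card_R'] at unimodular not_unimodular ⊢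
  simp only [mul_pow] at unimodular not_unimodular ⊢
  have not_unimodular_eq : (Nat.card (orthogonalPairs ι R') : ℝ) = t ^ n * Nat.card
      {p : (ι → R) × (ι → R) // (¬ ∃ i, IsUnit (p.1 i)) ∧ p ∈ orthogonalPairs ι R} :=
    mul_left_cancel₀ (pow_ne_zero n card_R_ne_zero) (by rw [← not_unimodular]; ring)
  rw [mul_add, mul_comm (Nat.card R : ℝ), unimodular, not_unimodular_eq]
  field_simp
  ring

end PrincipalMaximalIdeal

section PrimePower

open IsLocalRing

variable {p : ℕ} [hp : Fact p.Prime]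

theorem isUnit_iff_castHom_ne_zero (k : ℕ) (x : ZMod (p ^ (k + 1))) :
    IsUnit x ↔ ZMod.castHom (dvd_pow_self p k.succ_ne_zero) (ZMod p) x ≠ 0 := by
  obtain ⟨n, rfl⟩ := ZMod.natCast_zmod_surjective x
  rw [ZMod.isUnit_iff_coprime, Nat.coprime_pow_right_iff k.succ_pos, map_natCast, Ne,
    ZMod.natCast_eq_zero_iff, Nat.coprime_comm, hp.out.coprime_iff_not_dvd]

instance isLocalHom_castHom (k : ℕ) :
    IsLocalHom (ZMod.castHom (dvd_pow_self p k.succ_ne_zero) (ZMod p)) :=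
  ⟨fun x hx => (isUnit_iff_castHom_ne_zero k x).2 hx.ne_zero⟩

instance isLocalRing_zmod_prime_pow (k : ℕ) : IsLocalRing (ZMod (p ^ (k + 1))) :=
  (ZMod.castHom (dvd_pow_self p k.succ_ne_zero) (ZMod p)).domain_isLocalRing

theorem maximalIdeal_zmod_prime_pow (k : ℕ) :
    maximalIdeal (ZMod (p ^ (k + 1))) = Ideal.span {(p : ZMod (p ^ (k + 1)))} := by
  ext x
  rw [mem_maximalIdeal, mem_nonunits_iff, isUnit_iff_castHom_ne_zero, not_not,
    Ideal.mem_span_singleton]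
  constructor
  · obtain ⟨n, rfl⟩ := ZMod.natCast_zmod_surjective x
    rw [map_natCast, ZMod.natCast_eq_zero_iff]
    exact Nat.cast_dvd_cast
  · rintro ⟨y, rfl⟩
    rw [map_mul, map_natCast, ZMod.natCast_self, zero_mul]

theorem natCast_mul_eq_zero_iff_castHom_eq_zero (k : ℕ) (x : ZMod (p ^ (k + 1))) :
    p * x = 0 ↔ ZMod.castHom (pow_dvd_pow p k.le_succ) (ZMod (p ^ k)) x = 0 := by
  obtain ⟨n, rfl⟩ := ZMod.natCast_zmod_surjective x
  rw [map_natCast, ZMod.natCast_eq_zero_iff, ← Nat.cast_mul, ZMod.natCast_eq_zero_iff, pow_succ',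
    Nat.mul_dvd_mul_iff_left hp.out.pos]

theorem card_maximalIdeal_zmod_prime_pow (k : ℕ) :
    Nat.card (maximalIdeal (ZMod (p ^ (k + 1)))) = p ^ k := by
  obtain ⟨e, -⟩ := exists_addEquiv_of_eq_span_singleton
    (ZMod.castHom_surjective (pow_dvd_pow p k.le_succ)) (maximalIdeal_zmod_prime_pow k)
    (natCast_mul_eq_zero_iff_castHom_eq_zero k)
  rw [← Nat.card_congr e.toEquiv, Nat.card_zmod]

theorem cast_card_maximalIdeal_zmod_prime_pow (k : ℕ) :
    (Nat.card (maximalIdeal (ZMod (p ^ (k + 1)))) : ℝ) =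
      (p : ℝ)⁻¹ * Nat.card (ZMod (p ^ (k + 1))) := by
  have : (p : ℝ) ≠ 0 := Nat.cast_ne_zero.2 hp.out.ne_zero
  rw [card_maximalIdeal_zmod_prime_pow, Nat.card_zmod]
  push_cast [pow_succ]
  field_simp

theorem not_isSquare_residue_zmod_prime_pow {D : ℤ} (hD : ¬ IsSquare (D : ZMod p)) (k : ℕ) :
    ¬ IsSquare (residue (ZMod (p ^ (k + 1))) D) := fun h => hD <| by
  simpa only [map_intCast] using
    h.map (ResidueField.lift (ZMod.castHom (dvd_pow_self p k.succ_ne_zero) (ZMod p)))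

theorem tendsto_of_affine_recurrence {a : ℕ → ℝ} {b r : ℝ} (hr : |r| < 1)
    (ha : ∀ n, a (n + 1) = b + r * a n) : Tendsto a atTop (nhds (b / (1 - r))) := by
  have one_sub_ne_zero : 1 - r ≠ 0 := (sub_pos.2 (lt_of_abs_lt hr)).ne'
  have a_eq (n : ℕ) : a n = r ^ n * (a 0 - b / (1 - r)) + b / (1 - r) := by
    induction n with
    | zero => ring
    | succ n ih =>
      rw [ha, ih]
      field_simp
      ring
  rw [funext a_eq]
  simpa only [zero_mul, zero_add] using
    ((tendsto_pow_atTop_nhds_zero_of_abs_lt_one hr).mul_const _).add_const (b / (1 - r))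

theorem tendsto_orthogonalDensity (ι : Type*) [Fintype ι] [Nontrivial ι] :
    Tendsto (fun k => orthogonalDensity ι (ZMod (p ^ k))) atTop
      (nhds ((1 - (p : ℝ)⁻¹ ^ Fintype.card ι) / (1 - (p : ℝ)⁻¹ ^ Fintype.card ι / (p : ℝ)⁻¹))) := by
  refine tendsto_of_affine_recurrence ?_ fun k =>
    orthogonalDensity_eq ι (ZMod.castHom_surjective (pow_dvd_pow p k.le_succ))
      (maximalIdeal_zmod_prime_pow k) (natCast_mul_eq_zero_iff_castHom_eq_zero k)
      (cast_card_maximalIdeal_zmod_prime_pow k)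
  have inv_pos : 0 < (p : ℝ)⁻¹ := inv_pos.2 (Nat.cast_pos.2 hp.out.pos)
  rw [abs_of_pos (by positivity), div_lt_one inv_pos]
  exact pow_lt_self_of_lt_one₀ inv_pos (inv_lt_one_of_one_lt₀ (Nat.one_lt_cast.2 hp.out.one_lt))
    Fintype.one_lt_card

end PrimePower

section InertQuadraticAlgebra

open IsLocalRing QuadraticAlgebra

instance finite_quadraticAlgebra {R : Type*} [Finite R] (a b : R) :
    Finite (QuadraticAlgebra R a b) :=
  .of_equiv _ (equivProd a b).symm

theorem card_quadraticAlgebra {R : Type*} (a b : R) :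
    Nat.card (QuadraticAlgebra R a b) = Nat.card R ^ 2 := by
  rw [Nat.card_congr (equivProd a b), Nat.card_prod, sq]

/-- `AdjoinRoot (X ^ 2 - C a)` in the basis `1, √a`. -/
noncomputable def adjoinRootEquivQuadraticAlgebra {R : Type*} [CommRing R] (a : R) :
    AdjoinRoot (X ^ 2 - C a : R[X]) ≃ₐ[R] QuadraticAlgebra R a 0 :=
  have root_mul_root : AdjoinRoot.root (X ^ 2 - C a : R[X]) * AdjoinRoot.root (X ^ 2 - C a) =
      a • 1 + (0 : R) • AdjoinRoot.root (X ^ 2 - C a) := by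
    rw [zero_smul, add_zero, ← Algebra.algebraMap_eq_smul_one, ← sq, ← sub_eq_zero,
      ← AdjoinRoot.mk_self (f := (X ^ 2 - C a : R[X])), map_sub, map_pow, AdjoinRoot.mk_X,
      AdjoinRoot.mk_C, AdjoinRoot.algebraMap_eq]
  have aeval_omega : aeval (ω : QuadraticAlgebra R a 0) (X ^ 2 - C a : R[X]) = 0 := by
    simp [sq, omega_mul_omega_eq_add, Algebra.algebraMap_eq_smul_one]
  let toQuadratic : AdjoinRoot (X ^ 2 - C a : R[X]) →ₐ[R] QuadraticAlgebra R a 0 :=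
    AdjoinRoot.liftAlgHom _ (Algebra.ofId _ _) ω aeval_omega
  have toQuadratic_root : toQuadratic (AdjoinRoot.root _) = ω :=
    AdjoinRoot.liftAlgHom_root _ _ _ aeval_omega
  .ofAlgHom toQuadratic (QuadraticAlgebra.lift ⟨_, root_mul_root⟩)
    (QuadraticAlgebra.algHom_ext (by simp [toQuadratic_root]))
    (AdjoinRoot.algHom_ext (by simp [toQuadratic_root]))

variable {R : Type*} [CommRing R] [IsLocalRing R] {D : R}

theorem isUnit_of_not_isSquare_residue (hD : ¬ IsSquare (residue R D)) : IsUnit D := by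
  rw [← residue_ne_zero_iff_isUnit]
  exact fun h => hD (h ▸ .zero)

variable [hD : Fact (¬ IsSquare (residue R D))]

theorem isUnit_quadraticAlgebra_iff {z : QuadraticAlgebra R D 0} :
    IsUnit z ↔ IsUnit z.re ∨ IsUnit z.im := by
  rw [isUnit_iff_norm_isUnit, QuadraticAlgebra.norm_def, zero_mul, zero_mul, add_zero]
  simp_rw [← residue_ne_zero_iff_isUnit, map_sub, map_mul]
  contrapose!
  constructor
  · intro norm_eq_zero
    have im_eq_zero : residue R z.im = 0 := by
      by_contra im_ne_zero
      refine hD.out ⟨residue R z.re / residue R z.im, ?_⟩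
      field_simp
      linear_combination -norm_eq_zero
    simpa [im_eq_zero] using norm_eq_zero
  · rintro ⟨re_eq_zero, im_eq_zero⟩
    rw [re_eq_zero, im_eq_zero, mul_zero, mul_zero, sub_zero]

instance isLocalRing_quadraticAlgebra : IsLocalRing (QuadraticAlgebra R D 0) := by
  refine .of_nonunits_add fun z w hz hw => ?_
  rw [mem_nonunits_iff, isUnit_quadraticAlgebra_iff, not_or] at hz hw ⊢
  exact ⟨nonunits_add hz.1 hw.1, nonunits_add hz.2 hw.2⟩

theorem card_maximalIdeal_quadraticAlgebra :
    Nat.card (maximalIdeal (QuadraticAlgebra R D 0)) = Nat.card (maximalIdeal R) ^ 2 := by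
  rw [sq, ← Nat.card_prod]
  refine Nat.card_congr <| ((equivProd D 0).subtypeEquiv fun z => ?_).trans
    (Equiv.subtypeProdEquivProd (p := (· ∈ maximalIdeal R)) (q := (· ∈ maximalIdeal R)))
  rw [mem_maximalIdeal, mem_nonunits_iff, isUnit_quadraticAlgebra_iff, not_or]
  rfl

end InertQuadraticAlgebra

section ScalarDeterminant

open IsLocalRing

/-- The group `𝒜` of `2 × 2` matrices over the `R`-algebra `S` whose determinant comes from a unit
of `R`. -/
def scalarDet (R S : Type*) [CommRing R] [CommRing S] [Algebra R S] : Set (GL (Fin 2) S) :=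
  {σ | ∃ u : Rˣ, (σ : Matrix (Fin 2) (Fin 2) S).det = algebraMap R S u}

/-- The subset `𝒜ᵗ` of `scalarDet R S` of matrices whose trace comes from `R`. -/
def scalarDetTrace (R S : Type*) [CommRing R] [CommRing S] [Algebra R S] : Set (GL (Fin 2) S) :=
  {σ | σ ∈ scalarDet R S ∧
    ∃ z : R, (σ : Matrix (Fin 2) (Fin 2) S).trace = algebraMap R S z}

variable {R S S' : Type*} [CommRing R] [CommRing S] [CommRing S'] [Algebra R S] [Algebra R S']

theorem mapMatrix_mem_scalarDet_iff (e : S ≃ₐ[R] S') (σ : GL (Fin 2) S) :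
    Units.mapEquiv (e.mapMatrix (m := Fin 2)).toMulEquiv σ ∈ scalarDet R S' ↔
      σ ∈ scalarDet R S := by
  refine exists_congr fun u => ?_
  rw [← e.commutes, ← e.injective.eq_iff, AlgEquiv.map_det]
  rfl

theorem mapMatrix_mem_scalarDetTrace_iff (e : S ≃ₐ[R] S') (σ : GL (Fin 2) S) :
    Units.mapEquiv (e.mapMatrix (m := Fin 2)).toMulEquiv σ ∈ scalarDetTrace R S' ↔
      σ ∈ scalarDetTrace R S := by
  refine and_congr (mapMatrix_mem_scalarDet_iff e σ) (exists_congr fun z => ?_)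
  rw [← e.commutes, ← e.injective.eq_iff, AddMonoidHom.map_trace]
  rfl

theorem card_scalarDet_congr (e : S ≃ₐ[R] S') :
    Nat.card (scalarDet R S) = Nat.card (scalarDet R S') :=
  Nat.card_congr <| (Units.mapEquiv e.mapMatrix.toMulEquiv).toEquiv.subtypeEquiv fun σ =>
    (mapMatrix_mem_scalarDet_iff e σ).symm

theorem card_scalarDetTrace_congr (e : S ≃ₐ[R] S') :
    Nat.card (scalarDetTrace R S) = Nat.card (scalarDetTrace R S') :=
  Nat.card_congr <| (Units.mapEquiv e.mapMatrix.toMulEquiv).toEquiv.subtypeEquiv fun σ =>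
    (mapMatrix_mem_scalarDetTrace_iff e σ).symm

theorem exists_equiv_det_eq_dotProduct (S : Type*) [CommRing S] :
    ∃ e : Matrix (Fin 2) (Fin 2) S ≃ (Fin 2 → S) × (Fin 2 → S),
      ∀ A, A.det = (e A).1 ⬝ᵥ (e A).2 := by
  refine ⟨
    { toFun := fun A => (A 0, ![A 1 1, -A 1 0])
      invFun := fun p => ![p.1, ![-p.2 1, p.2 0]]
      left_inv := fun A => ?_
      right_inv := fun p => ?_ }, fun A => ?_⟩
  · ext i j
    fin_cases i <;> fin_cases j <;> simp
  · ext i <;> fin_cases i <;> simp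
  · change _ = A 0 ⬝ᵥ ![A 1 1, -A 1 0]
    rw [det_fin_two, vec2_dotProduct]
    simp [sub_eq_add_neg]

theorem card_scalarDet [IsLocalRing S] [Finite S]
    (hinj : Function.Injective (algebraMap R S)) :
    Nat.card (scalarDet R S) =
      (Nat.card S ^ 2 - Nat.card (maximalIdeal S) ^ 2) * Nat.card S * Nat.card Rˣ := by
  let IsScalarUnit (z : S) : Prop := ∃ u : Rˣ, z = algebraMap R S u
  have isUnit {z : S} : IsScalarUnit z → IsUnit z := by
    rintro ⟨u, rfl⟩
    exact u.isUnit.map _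
  have card_scalarUnits : Nat.card {z // IsScalarUnit z} = Nat.card Rˣ := by
    rw [← Nat.card_range_of_injective (hinj.comp Units.val_injective)]
    exact Nat.card_congr (Equiv.subtypeEquivRight fun z => exists_congr fun u => eq_comm)
  obtain ⟨rows, det_eq⟩ := exists_equiv_det_eq_dotProduct S
  have card_eq : Nat.card (scalarDet R S) =
      Nat.card {p : (Fin 2 → S) × (Fin 2 → S) //
        (∃ i, IsUnit (p.1 i)) ∧ IsScalarUnit (p.1 ⬝ᵥ p.2)} :=
    (card_units_subtype (P := fun A : Matrix (Fin 2) (Fin 2) S => IsScalarUnit A.det)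
      fun A hA => (isUnit_iff_isUnit_det A).2 (isUnit hA)).trans <|
    Nat.card_congr <| rows.subtypeEquiv fun A => by
      rw [det_eq, iff_and_self]
      exact fun h => exists_isUnit_of_isUnit_dotProduct (isUnit h)
  have := card_unimodular_dotProduct_mul_card (ι := Fin 2) IsScalarUnit
  rw [← card_eq, card_unimodular, card_scalarUnits, Fintype.card_fin] at this
  refine Nat.eq_of_mul_eq_mul_right (Nat.card_pos (α := S)) (this.trans ?_)
  ring

end ScalarDeterminant

section SquareRoots

open IsLocalRing

theorem card_sq_eq_add_card_sq_eq_mul {F : Type*} [Field F] [Finite F] {d : F}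
    (hd : ¬ IsSquare d) (w : F) :
    Nat.card {s : F // s ^ 2 = w} + Nat.card {s : F // s ^ 2 = d * w} = 2 := by
  classical
  have := Fintype.ofFinite F
  have char_ne_two : ringChar F ≠ 2 := fun h => hd (FiniteField.isSquare_of_char_two h d)
  have card_sqrts (a : F) : (Nat.card {s : F // s ^ 2 = a} : ℤ) = quadraticChar F a + 1 := by
    rw [← quadraticChar_card_sqrts char_ne_two, Set.toFinset_card, Nat.card_eq_fintype_card]
    rfl
  zify
  rw [card_sqrts, card_sqrts, map_mul, quadraticChar_neg_one_iff_not_isSquare.2 hd]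
  ring

variable {R : Type*} [CommRing R] [IsLocalRing R] [Finite R] {D : R}

theorem isUnit_two_of_not_isSquare_residue (hD : ¬ IsSquare (residue R D)) : IsUnit (2 : R) := by
  have := Finite.of_surjective _ (residue_surjective (R := R))
  rw [← residue_ne_zero_iff_isUnit, map_ofNat]
  refine Ring.two_ne_zero fun h => hD ?_
  exact FiniteField.isSquare_of_char_two h _

theorem card_isUnit_sq_sub_add_card_isUnit_sq_sub_mul (hD : ¬ IsSquare (residue R D)) (w : R) :
    Nat.card {s : R // IsUnit (s ^ 2 - w)} + Nat.card {s : R // IsUnit (s ^ 2 - D * w)} =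
      2 * Nat.card Rˣ := by
  have : Finite (ResidueField R) := .of_surjective _ residue_surjective
  have card_residue := card_subtype_comp_mul_card (residue R).toAddMonoidHom residue_surjective
  have card_not_isUnit (w : R) :
      Nat.card {s : R // ¬ IsUnit (s ^ 2 - w)} * Nat.card (ResidueField R) =
        Nat.card R * Nat.card {s : ResidueField R // s ^ 2 = residue R w} := by
    rw [← card_residue]
    simp [← residue_ne_zero_iff_isUnit, sub_eq_zero]
  have card_maximalIdeal : Nat.card (maximalIdeal R) * Nat.card (ResidueField R) = Nat.card R :=
    (Submodule.card_eq_card_quotient_mul_card (maximalIdeal R)).symm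
  have sum_not_isUnit : Nat.card {s : R // ¬ IsUnit (s ^ 2 - w)} +
      Nat.card {s : R // ¬ IsUnit (s ^ 2 - D * w)} = 2 * Nat.card (maximalIdeal R) := by
    refine Nat.eq_of_mul_eq_mul_right (Nat.card_pos (α := ResidueField R)) ?_
    rw [add_mul, card_not_isUnit, card_not_isUnit, ← mul_add, map_mul,
      card_sq_eq_add_card_sq_eq_mul hD, mul_assoc, card_maximalIdeal, mul_comm]
  have := card_subtype_add_card_subtype_not fun s : R => IsUnit (s ^ 2 - w)
  have := card_subtype_add_card_subtype_not fun s : R => IsUnit (s ^ 2 - D * w)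
  have := card_units_add_card_maximalIdeal (R := R)
  lia

theorem card_isUnit_sq_sub_of_perm (hD : ¬ IsSquare (residue R D)) {V : Type*} [Finite V]
    {f : V → R} (τ : Equiv.Perm V) (hτ : ∀ v, f (τ v) = D * f v) :
    Nat.card {p : V × R // IsUnit (p.2 ^ 2 - f p.1)} = Nat.card V * Nat.card Rˣ := by
  have := Fintype.ofFinite V
  -- The counts of `s` for `v` and for `τ v` add up to `2 * |Rˣ|`.
  refine Nat.eq_of_mul_eq_mul_left two_pos ?_
  rw [card_subtype_prod fun v s => IsUnit (s ^ 2 - f v), two_mul]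
  nth_rw 2 [← Equiv.sum_comp τ]
  simp_rw [← Finset.sum_add_distrib, hτ, card_isUnit_sq_sub_add_card_isUnit_sq_sub_mul hD]
  rw [Finset.sum_const, Finset.card_univ, smul_eq_mul, Nat.card_eq_fintype_card (α := V)]
  ring

end SquareRoots

section ScalarTrace

open IsLocalRing QuadraticAlgebra

/-- Minus the determinant of the traceless matrix `!![x, b; c, -x]`, where `v = (x, b, c)`. -/
def negDetTraceless {S : Type*} [CommRing S] (v : S × S × S) : S :=
  v.1 ^ 2 + v.2.1 * v.2.2

theorem negDetTraceless_smul {S : Type*} [CommRing S] (a : S) (v : S × S × S) :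
    negDetTraceless (a • v) = a ^ 2 * negDetTraceless v := by
  simp only [negDetTraceless, Prod.smul_fst, Prod.smul_snd, smul_eq_mul]
  ring

theorem exists_equiv_trace_eq_det_eq {S : Type*} [CommRing S] (h2 : IsUnit (2 : S)) :
    ∃ e : Matrix (Fin 2) (Fin 2) S ≃ (S × S × S) × S, ∀ A,
      A.trace = 2 * (e A).2 ∧ A.det = (e A).2 ^ 2 - negDetTraceless (e A).1 := by
  obtain ⟨half, two_mul_half⟩ := h2.exists_right_inv
  refine ⟨
    { toFun := fun A => ((half * (A 0 0 - A 1 1), A 0 1, A 1 0), half * (A 0 0 + A 1 1))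
      invFun := fun p => !![p.2 + p.1.1, p.1.2.1; p.1.2.2, p.2 - p.1.1]
      left_inv := fun A => ?_
      right_inv := fun p => ?_ }, fun A => ⟨?_, ?_⟩⟩
  · have half_add_half_sub (a d : S) : half * (a + d) + half * (a - d) = a := by
      linear_combination a * two_mul_half
    have half_add_sub_half_sub (a d : S) : half * (a + d) - half * (a - d) = d := by
      linear_combination d * two_mul_half
    simp only [half_add_half_sub, half_add_sub_half_sub]
    exact (eta_fin_two A).symm
  · have half_mul_add_sub (s x : S) : half * (s + x - (s - x)) = x := by
      linear_combination x * two_mul_half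
    have half_mul_add_add (s x : S) : half * (s + x + (s - x)) = s := by
      linear_combination s * two_mul_half
    exact Prod.ext (Prod.ext (half_mul_add_sub _ _) rfl) (half_mul_add_add _ _)
  · change _ = 2 * (half * (A 0 0 + A 1 1))
    rw [trace_fin_two]
    linear_combination -(A 0 0 + A 1 1) * two_mul_half
  · change _ = (half * (A 0 0 + A 1 1)) ^ 2 -
      ((half * (A 0 0 - A 1 1)) ^ 2 + A 0 1 * A 1 0)
    rw [det_fin_two]
    linear_combination -(A 0 0 * A 1 1) * (2 * half + 1) * two_mul_half

variable {R : Type*} [CommRing R] {D : R}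

/-- The triples `(x, b, c)` over `R[√D]` for which `!![x, b; c, -x]` has determinant in `R`. -/
def scalarDetTraceless (D : R) :
    Set (QuadraticAlgebra R D 0 × QuadraticAlgebra R D 0 × QuadraticAlgebra R D 0) :=
  {v | (negDetTraceless v).im = 0}

theorem mem_scalarDetTraceless
    {v : QuadraticAlgebra R D 0 × QuadraticAlgebra R D 0 × QuadraticAlgebra R D 0} :
    v ∈ scalarDetTraceless D ↔ (negDetTraceless v).im = 0 :=
  Iff.rfl

theorem card_scalarDetTraceless (h2 : IsUnit (2 : R)) :
    Nat.card (scalarDetTraceless D) = Nat.card (orthogonalPairs (Fin 3) R) := by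
  obtain ⟨half, two_mul_half⟩ := h2.exists_right_inv
  refine Nat.card_congr <| Equiv.subtypeEquiv
    { toFun := fun v => (![2 * v.1.re, v.2.1.re, v.2.2.re], ![v.1.im, v.2.2.im, v.2.1.im])
      invFun := fun p => (⟨half * p.1 0, p.2 0⟩, ⟨p.1 1, p.2 2⟩, ⟨p.1 2, p.2 1⟩)
      left_inv := fun v => ?_
      right_inv := fun p => ?_ } fun v => ?_
  · have half_mul_two_mul : half * (2 * v.1.re) = v.1.re := by
      linear_combination v.1.re * two_mul_half
    exact Prod.ext (QuadraticAlgebra.ext half_mul_two_mul rfl) rfl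
  · ext i <;> fin_cases i <;> simp [← mul_assoc, two_mul_half]
  · have im_negDetTraceless : (negDetTraceless v).im =
        ![2 * v.1.re, v.2.1.re, v.2.2.re] ⬝ᵥ ![v.1.im, v.2.2.im, v.2.1.im] := by
      rw [vec3_dotProduct']
      simp only [negDetTraceless, sq, im_add, im_mul, zero_mul, add_zero]
      ring
    exact Eq.congr_left im_negDetTraceless

theorem exists_eq_algebraMap_iff {z : QuadraticAlgebra R D 0} :
    (∃ r : R, z = algebraMap R _ r) ↔ z.im = 0 :=
  ⟨fun ⟨_, h⟩ => h ▸ rfl, fun h => ⟨z.re, QuadraticAlgebra.ext rfl h⟩⟩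

theorem exists_units_eq_algebraMap_iff {z : QuadraticAlgebra R D 0} :
    (∃ u : Rˣ, z = algebraMap R _ (u : R)) ↔ z.im = 0 ∧ IsUnit z.re :=
  ⟨fun ⟨u, h⟩ => h ▸ ⟨rfl, u.isUnit⟩, fun ⟨him, u, hu⟩ => ⟨u, QuadraticAlgebra.ext hu.symm him⟩⟩

theorem negDetTraceless_omega_smul
    (v : QuadraticAlgebra R D 0 × QuadraticAlgebra R D 0 × QuadraticAlgebra R D 0) :
    negDetTraceless ((ω : QuadraticAlgebra R D 0) • v) = D • negDetTraceless v := by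
  rw [negDetTraceless_smul, sq, omega_mul_omega_eq_add, zero_smul, add_zero, smul_one_mul]

theorem isUnit_omega (hD : IsUnit D) : IsUnit (ω : QuadraticAlgebra R D 0) := by
  rw [isUnit_iff_norm_isUnit, QuadraticAlgebra.norm_def]
  simpa using hD

theorem exists_perm_negDetTraceless_eq_mul (hD : IsUnit D) :
    ∃ τ : Equiv.Perm (scalarDetTraceless D), ∀ v,
      (negDetTraceless (τ v).1).re = D * (negDetTraceless v.1).re := by
  obtain ⟨w, hw⟩ := isUnit_omega hD
  have negDet_smul (v : QuadraticAlgebra R D 0 × QuadraticAlgebra R D 0 × QuadraticAlgebra R D 0) :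
      negDetTraceless (w • v) = D • negDetTraceless v := by
    rw [← negDetTraceless_omega_smul, ← hw]
    rfl
  refine ⟨(MulAction.toPerm w).subtypeEquiv fun v => ?_,
    fun v => congrArg re (negDet_smul v.1)⟩
  rw [MulAction.toPerm_apply, mem_scalarDetTraceless, mem_scalarDetTraceless, negDet_smul, im_smul,
    smul_eq_mul, hD.mul_right_eq_zero]

theorem exists_units_and_exists_iff (h2 : IsUnit (2 : R)) {s n : QuadraticAlgebra R D 0} :
    ((∃ u : Rˣ, s ^ 2 - n = algebraMap R _ (u : R)) ∧ ∃ z : R, 2 * s = algebraMap R _ z) ↔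
      s.im = 0 ∧ n.im = 0 ∧ IsUnit (s.re ^ 2 - n.re) := by
  rw [exists_units_eq_algebraMap_iff, exists_eq_algebraMap_iff, and_comm]
  have im_two_mul : (2 * s).im = 2 * s.im := by simp
  rw [im_two_mul, h2.mul_right_eq_zero]
  refine and_congr_right fun him => ?_
  simp [sq, him]

theorem card_scalarDetTrace_eq_card_isUnit_sq_sub (h2 : IsUnit (2 : R)) :
    Nat.card (scalarDetTrace R (QuadraticAlgebra R D 0)) =
      Nat.card {p : scalarDetTraceless D × R //
        IsUnit (p.2 ^ 2 - (negDetTraceless p.1.1).re)} := by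
  have two_isUnit : IsUnit (2 : QuadraticAlgebra R D 0) := by
    simpa only [map_ofNat] using h2.map (algebraMap R (QuadraticAlgebra R D 0))
  obtain ⟨e, he⟩ := exists_equiv_trace_eq_det_eq two_isUnit
  let restrict : {p : (_ × _ × _) × QuadraticAlgebra R D 0 // p.2.im = 0 ∧
        p.1 ∈ scalarDetTraceless D ∧ IsUnit (p.2.re ^ 2 - (negDetTraceless p.1).re)} ≃
      {p : scalarDetTraceless D × R // IsUnit (p.2 ^ 2 - (negDetTraceless p.1.1).re)} :=
    { toFun := fun p => ⟨(⟨p.1.1, p.2.2.1⟩, p.1.2.re), p.2.2.2⟩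
      invFun := fun p => ⟨(p.1.1.1, ⟨p.1.2, 0⟩), rfl, p.1.1.2, p.2⟩
      left_inv := fun p => Subtype.ext <| Prod.ext rfl <| QuadraticAlgebra.ext rfl p.2.1.symm }
  refine (card_units_subtype (P := fun A : Matrix (Fin 2) (Fin 2) (QuadraticAlgebra R D 0) =>
    (∃ u : Rˣ, A.det = algebraMap R _ (u : R)) ∧ ∃ z : R, A.trace = algebraMap R _ z)
    fun A ⟨⟨u, hu⟩, _⟩ => ?_).trans <| Nat.card_congr <| (e.subtypeEquiv fun A => ?_).trans restrict
  · exact (isUnit_iff_isUnit_det A).2 (hu ▸ u.isUnit.map _)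
  · rw [(he A).1, (he A).2]
    exact exists_units_and_exists_iff h2

theorem card_scalarDetTrace [IsLocalRing R] [Finite R] [hD : Fact (¬ IsSquare (residue R D))] :
    Nat.card (scalarDetTrace R (QuadraticAlgebra R D 0)) =
      Nat.card (orthogonalPairs (Fin 3) R) * Nat.card Rˣ := by
  have h2 := isUnit_two_of_not_isSquare_residue hD.out
  obtain ⟨τ, hτ⟩ := exists_perm_negDetTraceless_eq_mul (isUnit_of_not_isSquare_residue hD.out)
  rw [card_scalarDetTrace_eq_card_isUnit_sq_sub h2, ← card_scalarDetTraceless (D := D) h2]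
  exact card_isUnit_sq_sub_of_perm hD.out (f := fun v => (negDetTraceless v.1).re) τ hτ

end ScalarTrace

section Density

open IsLocalRing

theorem card_mul_card_scalarDetTrace_div_card_scalarDet {R : Type*} [CommRing R] [IsLocalRing R]
    [Finite R] {D : R} [Fact (¬ IsSquare (residue R D))] {t : ℝ}
    (ht : (Nat.card (maximalIdeal R) : ℝ) = t * Nat.card R) :
    Nat.card R * (Nat.card (scalarDetTrace R (QuadraticAlgebra R D 0)) : ℝ) /
        Nat.card (scalarDet R (QuadraticAlgebra R D 0)) =
      orthogonalDensity (Fin 3) R / (1 - t ^ 4) := by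
  have le : (Nat.card (maximalIdeal R) ^ 2) ^ 2 ≤ (Nat.card R ^ 2) ^ 2 := by
    gcongr
    exact Nat.card_le_card_of_injective _ Subtype.val_injective
  have card_units_ne_zero : (Nat.card Rˣ : ℝ) ≠ 0 := Nat.cast_ne_zero.2 Nat.card_pos.ne'
  rw [card_scalarDetTrace, card_scalarDet QuadraticAlgebra.algebraMap_injective,
    card_quadraticAlgebra, card_maximalIdeal_quadraticAlgebra, orthogonalDensity, Fintype.card_fin,
    div_div]
  push_cast [Nat.cast_sub le, ht]
  rw [← mul_assoc, mul_div_mul_right _ _ card_units_ne_zero]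
  congr 1
  ring

variable {p : ℕ} [hp : Fact p.Prime]

theorem tendsto_pow_mul_card_scalarDetTrace_div_card_scalarDet {D : ℤ}
    (hD : ¬ IsSquare (D : ZMod p)) :
    Tendsto (fun k => (p : ℝ) ^ k *
        Nat.card (scalarDetTrace (ZMod (p ^ k)) (InertRing p k D)) /
        Nat.card (scalarDet (ZMod (p ^ k)) (InertRing p k D))) atTop
      (nhds ((1 - (p : ℝ)⁻¹ ^ 3) / (1 - (p : ℝ)⁻¹ ^ 3 / (p : ℝ)⁻¹) / (1 - (p : ℝ)⁻¹ ^ 4))) := by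
  have density_eq (k : ℕ) : (p : ℝ) ^ (k + 1) *
      Nat.card (scalarDetTrace (ZMod (p ^ (k + 1))) (InertRing p (k + 1) D)) /
        Nat.card (scalarDet (ZMod (p ^ (k + 1))) (InertRing p (k + 1) D)) =
      orthogonalDensity (Fin 3) (ZMod (p ^ (k + 1))) / (1 - (p : ℝ)⁻¹ ^ 4) := by
    have := Fact.mk (not_isSquare_residue_zmod_prime_pow hD k)
    let e := adjoinRootEquivQuadraticAlgebra (D : ZMod (p ^ (k + 1)))
    rw [card_scalarDetTrace_congr e, card_scalarDet_congr e,
      ← card_mul_card_scalarDetTrace_div_card_scalarDet (D := (D : ZMod (p ^ (k + 1))))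
        (cast_card_maximalIdeal_zmod_prime_pow k),
      Nat.card_zmod, Nat.cast_pow]
  rw [← tendsto_add_atTop_iff_nat 1, funext density_eq]
  exact ((tendsto_add_atTop_iff_nat 1).2 (tendsto_orthogonalDensity (Fin 3))).div_const _

end Density

/-- For an odd prime `ℓ` and `D` a quadratic nonresidue modulo `ℓ`, the real sequence
`k ↦ ℓᵏ · #𝒜ᵗ_{ℓᵏ,I} / #𝒜_{ℓᵏ,I}` converges to `ℓ³(ℓ² + ℓ + 1)/((ℓ+1)(ℓ⁴ − 1))`. -/
theorem stmt_6 (ℓ : ℕ) (hℓ : ℓ.Prime) (hodd : ℓ ≠ 2) (D : ℤ)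
    (hD : ¬ IsSquare (D : ZMod ℓ)) :
    Tendsto (fun k : ℕ =>
      ((ℓ : ℝ) ^ k *
        (Nat.card {σ : GL (Fin 2) (InertRing ℓ k D) |
          (∃ u : (ZMod (ℓ ^ k))ˣ,
            (σ : Matrix (Fin 2) (Fin 2) (InertRing ℓ k D)).det =
              algebraMap (ZMod (ℓ ^ k)) (InertRing ℓ k D) (u : ZMod (ℓ ^ k))) ∧
          ∃ z : ZMod (ℓ ^ k),
            (σ : Matrix (Fin 2) (Fin 2) (InertRing ℓ k D)).trace =
              algebraMap (ZMod (ℓ ^ k)) (InertRing ℓ k D) z} : ℝ)) /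
        (Nat.card {σ : GL (Fin 2) (InertRing ℓ k D) |
          ∃ u : (ZMod (ℓ ^ k))ˣ,
            (σ : Matrix (Fin 2) (Fin 2) (InertRing ℓ k D)).det =
              algebraMap (ZMod (ℓ ^ k)) (InertRing ℓ k D) (u : ZMod (ℓ ^ k))} : ℝ))
      atTop
      (nhds ((ℓ : ℝ) ^ 3 * ((ℓ : ℝ) ^ 2 + ℓ + 1) / (((ℓ : ℝ) + 1) * ((ℓ : ℝ) ^ 4 - 1)))) := by
  have : Fact ℓ.Prime := ⟨hℓ⟩
  have one_lt : 1 < (ℓ : ℝ) := Nat.one_lt_cast.2 hℓ.one_lt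
  have limit_eq : (1 - (ℓ : ℝ)⁻¹ ^ 3) / (1 - (ℓ : ℝ)⁻¹ ^ 3 / (ℓ : ℝ)⁻¹) / (1 - (ℓ : ℝ)⁻¹ ^ 4) =
      (ℓ : ℝ) ^ 3 * ((ℓ : ℝ) ^ 2 + ℓ + 1) / (((ℓ : ℝ) + 1) * ((ℓ : ℝ) ^ 4 - 1)) := by
    have sq_sub_one_ne_zero : (ℓ : ℝ) ^ 2 - 1 ≠ 0 :=
      (sub_pos.2 (one_lt_pow₀ one_lt two_ne_zero)).ne'
    have pow_four_sub_one_ne_zero : (ℓ : ℝ) ^ 4 - 1 ≠ 0 :=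
      (sub_pos.2 (one_lt_pow₀ one_lt four_ne_zero)).ne'
    have add_one_ne_zero : (ℓ : ℝ) + 1 ≠ 0 := by linarith
    field_simp
    ring
  rw [← limit_eq]
  exact tendsto_pow_mul_card_scalarDetTrace_div_card_scalarDet hD
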